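/- Let α ∈ (0, √(1−Θ₀)). There exist C > 0 and h₀ > 0 such that, for all h ∈ (0,h₀) and every eigenpair (λ,ψ) of the magnetic Neumann Laplacian L_h with λ ≤ Θ₀ h + o(h), one has ∫_Ω exp(2α·dist(x,∂Ω)/h^{1/2}) |ψ(x)|² dx ≤ C ‖ψ‖². -/

import Mathlib

noncomputable section

open MeasureTheory Filter Topology Asymptotics

abbrev E3 := EuclideanSpace ℝ (Fin 3)

/-- `j`-th component of the magnetic gradient `(-i h ∇ - A) ψ`. -/
def magD (A : E3 → E3) (h : ℝ) (ψ : E3 → ℂ) (j : Fin 3) (x : E3) : ℂ :=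
  -(Complex.I * h) * fderiv ℝ ψ x (EuclideanSpace.single j 1) - (A x j : ℂ) * ψ x

/-- Magnetic quadratic form (energy) on a set `Ω`. -/
def magEnergy (Ω : Set E3) (A : E3 → E3) (h : ℝ) (ψ : E3 → ℂ) : ℝ :=
  ∫ x in Ω, ∑ j : Fin 3, ‖magD A h ψ j x‖ ^ 2

def l2sq (Ω : Set E3) (ψ : E3 → ℂ) : ℝ := ∫ x in Ω, ‖ψ x‖ ^ 2

/-- Sesquilinear magnetic form. -/
def magFormC (Ω : Set E3) (A : E3 → E3) (h : ℝ) (ψ φ : E3 → ℂ) : ℂ :=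
  ∫ x in Ω, ∑ j : Fin 3, magD A h ψ j x * starRingEnd ℂ (magD A h φ j x)

def l2ipC (Ω : Set E3) (ψ φ : E3 → ℂ) : ℂ :=
  ∫ x in Ω, ψ x * starRingEnd ℂ (φ x)

/-- `curl A = e₃`. -/
def HasUnitCurl (A : E3 → E3) : Prop :=
  ∀ x : E3,
    fderiv ℝ (fun y => A y 2) x (EuclideanSpace.single 1 1)
      - fderiv ℝ (fun y => A y 1) x (EuclideanSpace.single 2 1) = 0 ∧
    fderiv ℝ (fun y => A y 0) x (EuclideanSpace.single 2 1)
      - fderiv ℝ (fun y => A y 2) x (EuclideanSpace.single 0 1) = 0 ∧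
    fderiv ℝ (fun y => A y 1) x (EuclideanSpace.single 0 1)
      - fderiv ℝ (fun y => A y 0) x (EuclideanSpace.single 1 1) = 1

/-- Form domain: smooth up to the boundary, Dirichlet condition on `D`. -/
def InFormDomain (Ω D : Set E3) (ψ : E3 → ℂ) : Prop :=
  ContDiffOn ℝ (⊤ : ℕ∞) ψ (closure Ω) ∧ ∀ x ∈ D, ψ x = 0

/-- `n`-th min-max level (`n ≥ 1`) of the magnetic quadratic form, with the natural
(Neumann) condition on `∂Ω \ D` and Dirichlet condition on `D`. -/
def nthEV (Ω D : Set E3) (A : E3 → E3) (h : ℝ) (n : ℕ) : ℝ :=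
  sInf { μ : ℝ | ∃ V : Submodule ℂ (E3 → ℂ), Module.finrank ℂ V = n ∧
    (∀ ψ ∈ V, InFormDomain Ω D ψ) ∧
    μ = sSup ((fun ψ => magEnergy Ω A h ψ / l2sq Ω ψ) '' {ψ : E3 → ℂ | ψ ∈ V ∧ ψ ≠ 0}) }

/-- Weak eigenpair for the magnetic Laplacian with Dirichlet condition on `D` and
(natural) magnetic Neumann condition on the rest of the boundary. -/
def IsMagEigenpair (Ω D : Set E3) (A : E3 → E3) (h lam : ℝ) (ψ : E3 → ℂ) : Prop :=
  ψ ≠ 0 ∧ InFormDomain Ω D ψ ∧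
  ∀ φ : E3 → ℂ, InFormDomain Ω D φ →
    magFormC Ω A h ψ φ = (lam : ℂ) * l2ipC Ω ψ φ

/-- Lowest eigenvalue of the de Gennes operator (Neumann realization of
`-∂_t² + (ξ - t)²` on `L²(ℝ₊)`), defined through its quadratic form. -/
def deGennes (ξ : ℝ) : ℝ :=
  sInf { μ : ℝ | ∃ u : ℝ → ℝ, ContDiff ℝ (⊤ : ℕ∞) u ∧ HasCompactSupport u ∧
    (∫ t in Set.Ioi (0:ℝ), u t ^ 2) = 1 ∧
    μ = ∫ t in Set.Ioi (0:ℝ), (deriv u t ^ 2 + (ξ - t) ^ 2 * u t ^ 2) }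

def Theta0 : ℝ := sInf (Set.range deGennes)

/-- Lowest eigenvalue of the Montgomery operator `-∂_t² + (ξ - t²/2)²` on `L²(ℝ)`. -/
def montgomery (ξ : ℝ) : ℝ :=
  sInf { μ : ℝ | ∃ u : ℝ → ℝ, ContDiff ℝ (⊤ : ℕ∞) u ∧ HasCompactSupport u ∧
    (∫ t : ℝ, u t ^ 2) = 1 ∧
    μ = ∫ t : ℝ, (deriv u t ^ 2 + (ξ - t ^ 2 / 2) ^ 2 * u t ^ 2) }

def Theta0M : ℝ := sInf (Set.range montgomery)

/-- `Ω` is a sublevel set of a smooth function with nonvanishing gradient on `∂Ω`. -/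
def HasSmoothBoundary (Ω : Set E3) : Prop :=
  ∃ f : E3 → ℝ, ContDiff ℝ (⊤ : ℕ∞) f ∧ Ω = f ⁻¹' Set.Iio 0 ∧
    ∀ x ∈ frontier Ω, gradient f x ≠ 0

/-- `n` is the outward unit normal field of `Ω` along `∂Ω`. -/
def IsOutwardNormal (Ω : Set E3) (n : E3 → E3) : Prop :=
  ∃ f : E3 → ℝ, ContDiff ℝ (⊤ : ℕ∞) f ∧ Ω = f ⁻¹' Set.Iio 0 ∧
    (∀ x ∈ frontier Ω, gradient f x ≠ 0) ∧
    ∀ x ∈ frontier Ω, n x = ‖gradient f x‖⁻¹ • gradient f x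

/-- The function `∂Ω ∋ x ↦ e₃ · n(x)` vanishes (exactly) linearly on `Γ`. -/
def VanishesLinearlyOn (Ω Γ : Set E3) (n : E3 → E3) : Prop :=
  ∃ c > 0, ∀ x ∈ frontier Ω, c * Metric.infDist x Γ ≤ |n x 2|

/-!
For compactly supported `u`, integrating `|D₀u|² + |D₁u|² ≥ -2 Im (D₀u · conj (D₁u))` by parts
leaves the commutator of `D₀` and `D₁` on the right, that is `h ∫ (∂₀A₁ - ∂₁A₀) |u|²`. Functions
living away from `∂Ω` thus have energy at least `h ‖u‖²`, while an eigenfunction `ψ` has energy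
`lam ‖ψ‖²` with `lam` at most about `Θ₀ h`.

Test the eigenvalue equation with `w² ψ`, where `w` is a smooth version of
`exp (α dist(x, ∂Ω) / √h)` switched off within distance about `√h` of the boundary. By the IMS
localization formula, `w ψ` has energy `lam ‖w ψ‖² + h² ∫ |∇w|² |ψ|²`. Since `h |∇w|² ≤ α² w²`
except for a bounded error from the switching, comparison with the lower bound gives
`(1 - Θ₀ - α² - o(1)) ‖w ψ‖² ≤ M ‖ψ‖²`, and the condition on `α` makes the factor on the left
positive.
-/

section Calculus

lemma integrableOn_of_continuousOn_of_eq_zero {X F : Type*} [TopologicalSpace X] [T2Space X]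
    [MeasurableSpace X] [OpensMeasurableSpace X] [NormedAddCommGroup F]
    {μ : Measure X} [IsFiniteMeasureOnCompacts μ] {f : X → F} {s K : Set X} (hs : IsOpen s)
    (hK : IsCompact K) (hKs : K ⊆ s) (hf : ContinuousOn f s)
    (hzero : ∀ x ∈ s, x ∉ K → f x = 0) : IntegrableOn f s μ :=
  ((hf.mono hKs).integrableOn_compact hK).of_forall_sdiff_eq_zero hs.measurableSet
    fun x hx => hzero x hx.1 hx.2

variable {E F : Type*} [NormedAddCommGroup E] [NormedSpace ℝ E]
  [NormedAddCommGroup F] [NormedSpace ℝ F]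

lemma contDiff_smul_of_tsupport_subset {w : E → ℝ} {f : E → F} {s : Set E} {n : WithTop ℕ∞}
    (hw : ContDiff ℝ n w) (hf : ContDiffOn ℝ n f s) (hs : IsOpen s) (hws : tsupport w ⊆ s) :
    ContDiff ℝ n (fun x => w x • f x) := by
  refine (contMDiff_of_tsupport fun x hx => ContDiffAt.contMDiffAt ?_).contDiff
  have hxs : x ∈ s := hws (tsupport_smul_subset_left w f hx)
  exact hw.contDiffAt.smul (hf.contDiffAt (hs.mem_nhds hxs))

lemma fderiv_fderiv_apply_comm {f : E → F} (hf : ContDiff ℝ 2 f) (x v w : E) :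
    fderiv ℝ (fun y => fderiv ℝ f y v) x w = fderiv ℝ (fun y => fderiv ℝ f y w) x v := by
  have hdiff : DifferentiableAt ℝ (fderiv ℝ f) x :=
    (hf.fderiv_right (m := 1) (by norm_num)).differentiable (by simp) x
  simpa [fderiv_clm_apply hdiff (differentiableAt_const _)] using
    hf.contDiffAt.isSymmSndFDerivAt (by simp) w v

lemma norm_fderiv_comp_div_le {f : ℝ → ℝ} {d : E → ℝ} {x : E} {r : ℝ}
    (hf : DifferentiableAt ℝ f (d x / r)) (hd : DifferentiableAt ℝ d x) (hlip : LipschitzWith 1 d)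
    (hr : 0 < r) :
    ‖fderiv ℝ (fun y => f (d y / r)) x‖ ≤ |deriv f (d x / r)| / r := by
  have hdr : HasFDerivAt (fun y => d y / r) (r⁻¹ • fderiv ℝ d x) x := by
    simpa only [div_eq_inv_mul] using hd.hasFDerivAt.const_mul r⁻¹
  have hcomp : fderiv ℝ (fun y => f (d y / r)) x = deriv f (d x / r) • r⁻¹ • fderiv ℝ d x :=
    (hf.hasDerivAt.comp_hasFDerivAt x hdr).fderiv
  have hnorm : ‖fderiv ℝ d x‖ ≤ 1 := norm_fderiv_le_of_lipschitz ℝ hlip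
  rw [hcomp, norm_smul, norm_smul, Real.norm_eq_abs, norm_inv, Real.norm_of_nonneg hr.le,
    div_eq_mul_inv]
  exact mul_le_mul_of_nonneg_left (mul_le_of_le_one_right (by positivity) hnorm) (abs_nonneg _)

lemma integrable_mul_fderiv_apply_of_hasCompactSupport {𝕜 : Type*} [RCLike 𝕜] [MeasurableSpace E]
    [OpensMeasurableSpace E] {μ : Measure E} [IsFiniteMeasureOnCompacts μ] {f g : E → 𝕜}
    (hf : Continuous f) (hg : ContDiff ℝ 1 g) (hc : HasCompactSupport g) (v : E) :
    Integrable (fun x => f x * fderiv ℝ g x v) μ :=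
  (hf.mul ((hg.continuous_fderiv one_ne_zero).clm_apply
    continuous_const)).integrable_of_hasCompactSupport (hc.fderiv_apply ℝ v).mul_left

variable [MeasurableSpace E] [BorelSpace E] [FiniteDimensional ℝ E] {μ : Measure E}
  [μ.IsAddHaarMeasure] {𝕜 : Type*} [RCLike 𝕜]

theorem integral_mul_fderiv_eq_neg_of_hasCompactSupport {f g : E → 𝕜} (hf : ContDiff ℝ 1 f)
    (hg : ContDiff ℝ 1 g) (hc : HasCompactSupport g) (v : E) :
    ∫ x, f x * fderiv ℝ g x v ∂μ = -∫ x, fderiv ℝ f x v * g x ∂μ := by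
  have hf' : Continuous (fun x => fderiv ℝ f x v) :=
    (hf.continuous_fderiv one_ne_zero).clm_apply continuous_const
  refine integral_mul_fderiv_eq_neg_fderiv_mul_of_integrable ?_
    (integrable_mul_fderiv_apply_of_hasCompactSupport hf.continuous hg hc v) ?_
    (fun x _ => hf.differentiable one_ne_zero x) (fun x _ => hg.differentiable one_ne_zero x)
  · exact (hf'.mul hg.continuous).integrable_of_hasCompactSupport hc.mul_left
  · exact (hf.continuous.mul hg.continuous).integrable_of_hasCompactSupport hc.mul_left

theorem integral_fderiv_mul_fderiv_comm {f g : E → 𝕜} (hf : ContDiff ℝ 2 f)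
    (hg : ContDiff ℝ 1 g) (hc : HasCompactSupport g) (v w : E) :
    ∫ x, fderiv ℝ f x v * fderiv ℝ g x w ∂μ = ∫ x, fderiv ℝ f x w * fderiv ℝ g x v ∂μ := by
  have hf' (v : E) : ContDiff ℝ 1 (fun x => fderiv ℝ f x v) :=
    (hf.fderiv_right (by norm_num)).clm_apply contDiff_const
  rw [integral_mul_fderiv_eq_neg_of_hasCompactSupport (hf' v) hg hc,
    integral_mul_fderiv_eq_neg_of_hasCompactSupport (hf' w) hg hc]
  simp only [fderiv_fderiv_apply_comm hf _ v w]

open ComplexConjugate in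
theorem integral_im_fderiv_mul_conj_fderiv_eq_zero {u : E → ℂ} (hu : ContDiff ℝ 2 u)
    (hc : HasCompactSupport u) (v w : E) :
    ∫ x, (fderiv ℝ u x v * conj (fderiv ℝ u x w)).im ∂μ = 0 := by
  have hu' (v : E) : Continuous (fun x => fderiv ℝ u x v) :=
    (hu.continuous_fderiv two_ne_zero).clm_apply continuous_const
  have hint : Integrable (fun x => fderiv ℝ u x v * conj (fderiv ℝ u x w)) μ :=
    ((hu' v).mul (Complex.continuous_conj.comp (hu' w))).integrable_of_hasCompactSupport
      (hc.fderiv_apply ℝ v).mul_right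
  have hconj (x y : E) : fderiv ℝ (fun z => conj (u z)) x y = conj (fderiv ℝ u x y) :=
    congrArg (· y) (Complex.conjCLE.comp_fderiv (f := u) (x := x))
  have hreal : conj (∫ x, fderiv ℝ u x v * conj (fderiv ℝ u x w) ∂μ)
      = ∫ x, fderiv ℝ u x v * conj (fderiv ℝ u x w) ∂μ := by
    have hcomm := integral_fderiv_mul_fderiv_comm (μ := μ) (f := fun z => conj (u z))
      (Complex.conjCLE.contDiff.comp hu) (hu.of_le one_le_two) hc v w
    simp only [hconj] at hcomm
    simpa only [← integral_conj, map_mul, Complex.conj_conj, mul_comm (conj _)] using hcomm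
  exact (integral_im hint).trans (Complex.conj_eq_iff_im.1 hreal)

end Calculus

section Mollification

open ContinuousLinearMap Convolution

variable {E F : Type*} [NormedAddCommGroup E] [NormedSpace ℝ E] [FiniteDimensional ℝ E]
  [NormedAddCommGroup F] [NormedSpace ℝ F] {f : E → F} {K : NNReal}

lemma lipschitzWith_normed_convolution [MeasurableSpace E] [BorelSpace E] {μ : Measure E}
    [μ.IsAddHaarMeasure] (φ : ContDiffBump (0 : E)) (hf : LipschitzWith K f) :
    LipschitzWith K (φ.normed μ ⋆[lsmul ℝ ℝ, μ] f) := by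
  have hint (x : E) : Integrable (fun t => φ.normed μ t • f (x - t)) μ :=
    (φ.continuous_normed.smul (hf.continuous.comp (by fun_prop))).integrable_of_hasCompactSupport
      φ.hasCompactSupport_normed.smul_right
  refine LipschitzWith.of_dist_le_mul fun x y => ?_
  simp only [convolution, lsmul_apply]
  rw [dist_eq_norm, ← integral_sub (hint x) (hint y)]
  calc ‖∫ t, φ.normed μ t • f (x - t) - φ.normed μ t • f (y - t) ∂μ‖
      ≤ ∫ t, φ.normed μ t * (K * dist x y) ∂μ := by
        refine norm_integral_le_of_norm_le (φ.integrable_normed.mul_const _)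
          (.of_forall fun t => ?_)
        rw [← smul_sub, norm_smul, Real.norm_of_nonneg (φ.nonneg_normed t), ← dist_eq_norm,
          ← dist_sub_right x y t]
        exact mul_le_mul_of_nonneg_left (hf.dist_le_mul _ _) (φ.nonneg_normed t)
    _ = K * dist x y := by rw [integral_mul_const, φ.integral_normed, one_mul]

theorem exists_contDiff_lipschitzWith_dist_le [CompleteSpace F] (hf : LipschitzWith K f) {ε : ℝ}
    (hε : 0 < ε) :
    ∃ g : E → F, ContDiff ℝ (⊤ : ℕ∞) g ∧ LipschitzWith K g ∧ ∀ x, dist (g x) (f x) ≤ K * ε := by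
  borelize E
  let φ : ContDiffBump (0 : E) := ⟨ε / 2, ε, half_pos hε, half_lt_self hε⟩
  refine ⟨φ.normed Measure.addHaar ⋆[lsmul ℝ ℝ, Measure.addHaar] f,
    φ.hasCompactSupport_normed.contDiff_convolution_left _ φ.contDiff_normed
      hf.continuous.locallyIntegrable,
    lipschitzWith_normed_convolution φ hf, fun x => ?_⟩
  refine φ.dist_normed_convolution_le hf.continuous.aestronglyMeasurable fun y hy => ?_
  exact (hf.dist_le_mul y x).trans (mul_le_mul_of_nonneg_left (le_of_lt hy) K.coe_nonneg)

end Mollification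

section AgmonWeight

/-- The one-dimensional profile of the Agmon weight: `exp (α t)` for `t ≥ 3`, smoothly switched off
for `t ≤ 2`. The dead zone leaves room for a mollified distance to the boundary, measured in units
of the mollification radius. -/
def agmonProfile (α t : ℝ) : ℝ :=
  Real.smoothTransition (t - 2) * Real.exp (α * t)

variable {α t : ℝ}

lemma contDiff_agmonProfile : ContDiff ℝ (⊤ : ℕ∞) (agmonProfile α) :=
  (Real.smoothTransition.contDiff.comp (contDiff_id.sub contDiff_const)).mul
    (Real.contDiff_exp.comp (contDiff_const.mul contDiff_id))

lemma agmonProfile_of_le_two (ht : t ≤ 2) : agmonProfile α t = 0 := by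
  rw [agmonProfile, Real.smoothTransition.zero_of_nonpos (by linarith), zero_mul]

lemma agmonProfile_of_three_le (ht : 3 ≤ t) : agmonProfile α t = Real.exp (α * t) := by
  rw [agmonProfile, Real.smoothTransition.one_of_one_le (by linarith), one_mul]

lemma exp_le_mul_agmonProfile_sq_add_one (hα : 0 ≤ α) :
    Real.exp (2 * α * t) ≤ Real.exp (6 * α) * (agmonProfile α t ^ 2 + 1) := by
  rcases le_total t 3 with ht | ht
  · calc Real.exp (2 * α * t) ≤ Real.exp (6 * α) := Real.exp_le_exp.2 (by nlinarith)
      _ ≤ _ := le_mul_of_one_le_right (Real.exp_nonneg _)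
        (le_add_of_nonneg_left (sq_nonneg (agmonProfile α t)))
  · have hexp : agmonProfile α t ^ 2 = Real.exp (2 * α * t) := by
      rw [agmonProfile_of_three_le ht, ← Real.exp_nat_mul]
      congr 1
      push_cast
      ring
    rw [hexp]
    nlinarith [Real.exp_pos (2 * α * t), Real.one_le_exp (show 0 ≤ 6 * α by positivity)]

lemma deriv_agmonProfile_of_lt_two (ht : t < 2) : deriv (agmonProfile α) t = 0 := by
  have hzero : agmonProfile α =ᶠ[𝓝 t] fun _ => 0 := by
    filter_upwards [Iio_mem_nhds ht] with s hs using agmonProfile_of_le_two (le_of_lt hs)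
  rw [hzero.deriv_eq, deriv_const]

lemma deriv_agmonProfile_of_three_lt (ht : 3 < t) :
    deriv (agmonProfile α) t = α * agmonProfile α t := by
  have hexp : agmonProfile α =ᶠ[𝓝 t] fun s => Real.exp (α * s) := by
    filter_upwards [Ioi_mem_nhds ht] with s hs using agmonProfile_of_three_le (le_of_lt hs)
  have hderiv : HasDerivAt (fun s => Real.exp (α * s)) (Real.exp (α * t) * (α * 1)) t :=
    ((hasDerivAt_id t).const_mul α).exp
  rw [hexp.deriv_eq, hderiv.deriv, agmonProfile_of_three_le ht.le, mul_one, mul_comm]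

lemma exists_deriv_agmonProfile_sq_le (α : ℝ) :
    ∃ M, 0 ≤ M ∧ ∀ t, deriv (agmonProfile α) t ^ 2 ≤ α ^ 2 * agmonProfile α t ^ 2 + M := by
  have hcont : Continuous (fun t => deriv (agmonProfile α) t ^ 2) :=
    (contDiff_agmonProfile.continuous_deriv (by simp)).pow 2
  obtain ⟨M, hM⟩ := isCompact_Icc.bddAbove_image (hcont.continuousOn (s := Set.Icc 2 3))
  have hbound : ∀ t ∈ Set.Icc (2 : ℝ) 3, deriv (agmonProfile α) t ^ 2 ≤ M :=
    fun t ht => hM ⟨t, ht, rfl⟩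
  have hM0 : 0 ≤ M := (sq_nonneg _).trans (hbound 2 (by norm_num))
  refine ⟨M, hM0, fun t => ?_⟩
  rcases lt_or_ge t 2 with ht2 | ht2
  · rw [deriv_agmonProfile_of_lt_two ht2, zero_pow two_ne_zero]
    positivity
  rcases le_or_gt t 3 with ht3 | ht3
  · exact (hbound t ⟨ht2, ht3⟩).trans (le_add_of_nonneg_left (by positivity))
  · rw [deriv_agmonProfile_of_three_lt ht3, mul_pow]
    exact le_add_of_nonneg_right hM0

lemma tsupport_agmonProfile_comp_subset {E : Type*} [PseudoMetricSpace E] {Ω : Set E}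
    {d : E → ℝ} {r : ℝ} (hr : 0 < r) (hd : ∀ x, d x ≤ Metric.infDist x Ωᶜ + r) :
    tsupport (fun x => agmonProfile α (d x / r)) ⊆ Ω := by
  have hfar : tsupport (fun x => agmonProfile α (d x / r)) ⊆ {x | r ≤ Metric.infDist x Ωᶜ} := by
    refine closure_minimal (fun x hx => ?_)
      (isClosed_le continuous_const (Metric.continuous_infDist_pt _))
    have hlt : 2 < d x / r := not_le.1 fun hle => hx (agmonProfile_of_le_two hle)
    rw [lt_div_iff₀ hr] at hlt
    exact (show r ≤ Metric.infDist x Ωᶜ by linarith [hd x])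
  intro x hx
  by_contra hxΩ
  have hle : r ≤ Metric.infDist x Ωᶜ := hfar hx
  exact hr.not_ge (by rwa [Metric.infDist_zero_of_mem hxΩ] at hle)

variable {E : Type*} [NormedAddCommGroup E] [NormedSpace ℝ E] [FiniteDimensional ℝ E]

lemma infDist_frontier_le_infDist_compl {s : Set E} {x : E} (hx : x ∈ s) :
    Metric.infDist x (frontier s) ≤ Metric.infDist x sᶜ := by
  rcases eq_or_ne s Set.univ with rfl | hs
  · simp
  · obtain ⟨y, hy, hdist⟩ := exists_mem_frontier_infDist_compl_eq_dist hx hs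
    exact hdist ▸ Metric.infDist_le_dist_of_mem hy

/-- A smooth weight `w` supported in `Ω` that stands in for `exp (α dist(x, ∂Ω) / r)`: `eikonal`
bounds its gradient up to the defect `M` caused by switching `w` off near the boundary, and `exp_le`
says that `w` still controls the exponential, with constant `K`. -/
structure IsAgmonWeight (α M K r : ℝ) (Ω : Set E) (w : E → ℝ) : Prop where
  contDiff : ContDiff ℝ (⊤ : ℕ∞) w
  tsupport_subset : tsupport w ⊆ Ω
  eikonal : ∀ x, r ^ 2 * ‖fderiv ℝ w x‖ ^ 2 ≤ α ^ 2 * w x ^ 2 + M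
  exp_le : ∀ x ∈ Ω, Real.exp (2 * α * Metric.infDist x (frontier Ω) / r) ≤ K * (w x ^ 2 + 1)

variable (E) in
theorem exists_isAgmonWeight (hα : 0 ≤ α) :
    ∃ M K : ℝ, 0 ≤ M ∧ 0 < K ∧ ∀ (Ω : Set E) {r : ℝ}, 0 < r → ∃ w, IsAgmonWeight α M K r Ω w := by
  obtain ⟨M, hM, hderiv⟩ := exists_deriv_agmonProfile_sq_le α
  refine ⟨M, Real.exp (2 * α) * Real.exp (6 * α), hM, by positivity, fun Ω r hr => ?_⟩
  obtain ⟨d, hd, hlip, hdist⟩ := exists_contDiff_lipschitzWith_dist_le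
    (Metric.lipschitz_infDist_pt Ωᶜ) hr
  have hclose (x : E) : |d x - Metric.infDist x Ωᶜ| ≤ r := by simpa [Real.dist_eq] using hdist x
  refine ⟨fun x => agmonProfile α (d x / r), contDiff_agmonProfile.comp (hd.div_const r),
    tsupport_agmonProfile_comp_subset hr fun x => by linarith [(abs_le.1 (hclose x)).2],
    fun x => ?_, fun x hx => ?_⟩
  · have hgrad := norm_fderiv_comp_div_le (contDiff_agmonProfile.differentiable (by simp) _)
      (hd.differentiable (by simp) x) hlip hr (f := agmonProfile α)
    rw [le_div_iff₀' hr] at hgrad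
    calc r ^ 2 * ‖fderiv ℝ (fun y => agmonProfile α (d y / r)) x‖ ^ 2
        ≤ deriv (agmonProfile α) (d x / r) ^ 2 := by
          rw [← mul_pow, ← sq_abs (deriv _ _)]
          gcongr
      _ ≤ _ := hderiv _
  · have hdiv : Metric.infDist x (frontier Ω) / r ≤ 1 + d x / r := by
      rw [one_add_div hr.ne']
      gcongr
      linarith [infDist_frontier_le_infDist_compl hx, (abs_le.1 (hclose x)).1]
    calc Real.exp (2 * α * Metric.infDist x (frontier Ω) / r)
        ≤ Real.exp (2 * α * (1 + d x / r)) := by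
          rw [mul_div_assoc]
          gcongr
      _ = Real.exp (2 * α) * Real.exp (2 * α * (d x / r)) := by
          rw [← Real.exp_add, mul_add, mul_one]
      _ ≤ Real.exp (2 * α) * (Real.exp (6 * α) * (agmonProfile α (d x / r) ^ 2 + 1)) := by
          gcongr
          exact exp_le_mul_agmonProfile_sq_add_one hα
      _ = _ := (mul_assoc _ _ _).symm

end AgmonWeight

section MagneticField

open ComplexConjugate

variable {A : E3 → E3} {h : ℝ} {u : E3 → ℂ} {i j : Fin 3} {x : E3}

/-- The component `∂ᵢAⱼ - ∂ⱼAᵢ` of the magnetic field, viewed as the two-form `dA`. -/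
def magneticField (A : E3 → E3) (i j : Fin 3) (x : E3) : ℝ :=
  fderiv ℝ (fun y => A y j) x (.single i 1) - fderiv ℝ (fun y => A y i) x (.single j 1)

lemma HasUnitCurl.magneticField_zero_one (hA : HasUnitCurl A) : magneticField A 0 1 x = 1 :=
  (hA x).2.2

lemma magD_eq_zero_of_notMem_tsupport (hx : x ∉ tsupport u) : magD A h u j x = 0 := by
  have hfderiv : fderiv ℝ u x = 0 :=
    image_eq_zero_of_notMem_tsupport fun hx' => hx (tsupport_fderiv_subset ℝ hx')
  simp [magD, hfderiv, image_eq_zero_of_notMem_tsupport hx]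

lemma continuousOn_magD {s : Set E3} (hA : Continuous A) (hs : IsOpen s)
    (hu : ContDiffOn ℝ 1 u s) : ContinuousOn (magD A h u j) s := by
  have hfderiv : ContinuousOn (fun x => fderiv ℝ u x (.single j 1)) s :=
    (hu.continuousOn_fderiv_of_isOpen hs le_rfl).clm_apply continuousOn_const
  have hAj : Continuous (fun x => (A x j : ℂ)) := by fun_prop
  exact (continuousOn_const.mul hfderiv).sub (hAj.continuousOn.mul hu.continuousOn)

lemma integrable_magD_mul_conj (hA : Continuous A) (hu : ContDiff ℝ 1 u)
    (hc : HasCompactSupport u) (i j : Fin 3) :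
    Integrable (fun x => magD A h u i x * conj (magD A h u j x)) := by
  have hcont (k : Fin 3) : Continuous (magD A h u k) :=
    continuousOn_univ.1 (continuousOn_magD hA isOpen_univ hu.contDiffOn)
  refine ((hcont i).mul (Complex.continuous_conj.comp (hcont j))).integrable_of_hasCompactSupport
    (.intro hc fun x hx => ?_)
  simp [magD_eq_zero_of_notMem_tsupport hx]

lemma integrable_sum_norm_magD_sq (hA : Continuous A) (hu : ContDiff ℝ 1 u)
    (hc : HasCompactSupport u) : Integrable (fun x => ∑ j, ‖magD A h u j x‖ ^ 2) := by
  refine integrable_finsetSum _ fun j _ => ?_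
  simpa [Complex.mul_conj, Complex.normSq_eq_norm_sq, ← Complex.ofReal_pow] using
    (integrable_magD_mul_conj hA hu hc j j).re

lemma fderiv_norm_sq_comp_apply (hu : DifferentiableAt ℝ u x) (v : E3) :
    fderiv ℝ (fun y => ‖u y‖ ^ 2) x v = 2 * (conj (u x) * fderiv ℝ u x v).re := by
  rw [hu.hasFDerivAt.norm_sq.fderiv]
  simp [Complex.inner, mul_add, mul_comm]

lemma im_magD_mul_conj_magD (hu : DifferentiableAt ℝ u x) :
    (magD A h u i x * conj (magD A h u j x)).im =
      h ^ 2 * (fderiv ℝ u x (.single i 1) * conj (fderiv ℝ u x (.single j 1))).im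
      + h / 2 * (A x j * fderiv ℝ (fun y => ‖u y‖ ^ 2) x (.single i 1)
          - A x i * fderiv ℝ (fun y => ‖u y‖ ^ 2) x (.single j 1)) := by
  rw [fderiv_norm_sq_comp_apply hu, fderiv_norm_sq_comp_apply hu]
  simp only [magD, neg_mul, map_sub, map_neg, map_mul, Complex.conj_I, Complex.conj_ofReal,
    neg_neg, Complex.mul_im, Complex.sub_re, Complex.neg_re, Complex.mul_re, Complex.I_re,
    Complex.ofReal_re, Complex.I_im, Complex.ofReal_im, Complex.sub_im, Complex.conj_im,
    Complex.conj_re, Complex.neg_im]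
  ring

lemma integral_mul_fderiv_sub_eq_neg_integral_magneticField {n : E3 → ℝ} (hA : ContDiff ℝ 1 A)
    (hn : ContDiff ℝ 1 n) (hc : HasCompactSupport n) (i j : Fin 3) :
    ∫ x, (A x j * fderiv ℝ n x (.single i 1) - A x i * fderiv ℝ n x (.single j 1)) =
      -∫ x, magneticField A i j x * n x := by
  have hA' (k : Fin 3) : ContDiff ℝ 1 (fun x => A x k) := contDiff_euclidean.1 hA k
  have hint (k l : Fin 3) : Integrable (fun x => A x k * fderiv ℝ n x (.single l 1)) :=
    integrable_mul_fderiv_apply_of_hasCompactSupport (hA' k).continuous hn hc _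
  have hint' (k l : Fin 3) :
      Integrable (fun x => fderiv ℝ (fun y => A y k) x (.single l 1) * n x) :=
    ((((hA' k).continuous_fderiv one_ne_zero).clm_apply continuous_const).mul
      hn.continuous).integrable_of_hasCompactSupport hc.mul_left
  rw [integral_sub (hint j i) (hint i j),
    integral_mul_fderiv_eq_neg_of_hasCompactSupport (hA' j) hn hc,
    integral_mul_fderiv_eq_neg_of_hasCompactSupport (hA' i) hn hc]
  simp only [magneticField, sub_mul]
  rw [integral_sub (hint' j i) (hint' i j)]
  ring

lemma two_mul_integral_im_magD_mul_conj_magD (hA : ContDiff ℝ 1 A) (hu : ContDiff ℝ 2 u)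
    (hc : HasCompactSupport u) (i j : Fin 3) :
    2 * ∫ x, (magD A h u i x * conj (magD A h u j x)).im =
      -(h * ∫ x, magneticField A i j x * ‖u x‖ ^ 2) := by
  have hn : ContDiff ℝ 1 (fun x => ‖u x‖ ^ 2) := (hu.norm_sq ℂ).of_le one_le_two
  have hnc : HasCompactSupport (fun x => ‖u x‖ ^ 2) :=
    hc.comp_left (g := fun z : ℂ => ‖z‖ ^ 2) (by simp)
  have hu' (k : Fin 3) : Continuous (fun x => fderiv ℝ u x (.single k 1)) :=
    (hu.continuous_fderiv two_ne_zero).clm_apply continuous_const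
  have hint : Integrable (fun x =>
      (fderiv ℝ u x (.single i 1) * conj (fderiv ℝ u x (.single j 1))).im) :=
    (((hu' i).mul (Complex.continuous_conj.comp (hu' j))).integrable_of_hasCompactSupport
      (hc.fderiv_apply ℝ _).mul_right).im
  have hint' (k l : Fin 3) :
      Integrable (fun x => A x k * fderiv ℝ (fun y => ‖u y‖ ^ 2) x (.single l 1)) :=
    integrable_mul_fderiv_apply_of_hasCompactSupport (contDiff_euclidean.1 hA k).continuous hn hnc _
  simp only [im_magD_mul_conj_magD (hu.differentiable two_ne_zero _)]
  have hflux : Integrable (fun x => A x j * fderiv ℝ (fun y => ‖u y‖ ^ 2) x (.single i 1)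
      - A x i * fderiv ℝ (fun y => ‖u y‖ ^ 2) x (.single j 1)) := (hint' j i).sub (hint' i j)
  rw [integral_add (hint.const_mul _) (hflux.const_mul _), integral_const_mul,
    integral_const_mul, integral_im_fderiv_mul_conj_fderiv_eq_zero hu hc,
    integral_mul_fderiv_sub_eq_neg_integral_magneticField hA hn hnc]
  ring

lemma neg_two_mul_im_mul_conj_le (z w : ℂ) :
    -(2 * (z * conj w).im) ≤ ‖z‖ ^ 2 + ‖w‖ ^ 2 := by
  have him : -(z * conj w).im ≤ ‖z‖ * ‖w‖ := by
    simpa using (neg_le_abs _).trans (Complex.abs_im_le_norm (z * conj w))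
  linarith [two_mul_le_add_sq ‖z‖ ‖w‖]

theorem mul_integral_magneticField_le (hA : ContDiff ℝ 1 A) (hu : ContDiff ℝ 2 u)
    (hc : HasCompactSupport u) (hij : i ≠ j) :
    h * ∫ x, magneticField A i j x * ‖u x‖ ^ 2 ≤ ∫ x, ∑ k, ‖magD A h u k x‖ ^ 2 := by
  have hu1 : ContDiff ℝ 1 u := hu.of_le one_le_two
  calc h * ∫ x, magneticField A i j x * ‖u x‖ ^ 2
      = ∫ x, -(2 * (magD A h u i x * conj (magD A h u j x)).im) := by
        rw [integral_neg, integral_const_mul, two_mul_integral_im_magD_mul_conj_magD hA hu hc,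
          neg_neg]
    _ ≤ ∫ x, ∑ k, ‖magD A h u k x‖ ^ 2 := by
        have hint := (integrable_magD_mul_conj (h := h) hA.continuous hu1 hc i j).im
        refine integral_mono (hint.const_mul 2).neg
          (integrable_sum_norm_magD_sq hA.continuous hu1 hc) fun x => ?_
        exact (neg_two_mul_im_mul_conj_le _ _).trans (Finset.add_le_sum
          (f := fun k => ‖magD A h u k x‖ ^ 2) (fun k _ => by positivity)
          (Finset.mem_univ i) (Finset.mem_univ j) hij)

theorem HasUnitCurl.mul_l2sq_le_magEnergy {Ω : Set E3} (hcurl : HasUnitCurl A)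
    (hA : ContDiff ℝ 1 A) (hu : ContDiff ℝ 2 u) (hc : HasCompactSupport u) (hs : tsupport u ⊆ Ω) :
    h * l2sq Ω u ≤ magEnergy Ω A h u := by
  have hnorm : l2sq Ω u = ∫ x, ‖u x‖ ^ 2 :=
    setIntegral_eq_integral_of_forall_compl_eq_zero fun x hx => by
      simp [image_eq_zero_of_notMem_tsupport fun hx' => hx (hs hx')]
  have henergy : magEnergy Ω A h u = ∫ x, ∑ j, ‖magD A h u j x‖ ^ 2 :=
    setIntegral_eq_integral_of_forall_compl_eq_zero fun x hx => by
      simp [magD_eq_zero_of_notMem_tsupport fun hx' => hx (hs hx')]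
  rw [hnorm, henergy]
  simpa [hcurl.magneticField_zero_one] using
    mul_integral_magneticField_le (h := h) hA hu hc (zero_ne_one (α := Fin 3))

end MagneticField

section Localization

open ComplexConjugate

variable {Ω D : Set E3} {A : E3 → E3} {h lam : ℝ} {w : E3 → ℝ} {ψ : E3 → ℂ}

lemma InFormDomain.smul (hψ : InFormDomain Ω D ψ) (hw : ContDiff ℝ (⊤ : ℕ∞) w) :
    InFormDomain Ω D (fun x => w x • ψ x) :=
  ⟨hw.contDiffOn.smul hψ.1, fun x hx => by simp [hψ.2 x hx]⟩

lemma magD_smul {x : E3} (hw : DifferentiableAt ℝ w x) (hψ : DifferentiableAt ℝ ψ x) (j : Fin 3) :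
    magD A h (fun y => w y • ψ y) j x =
      w x • magD A h ψ j x - Complex.I * h * (fderiv ℝ w x (.single j 1) • ψ x) := by
  rw [magD, magD, fderiv_fun_smul hw hψ]
  simp only [add_apply, smul_apply, Complex.real_smul, ContinuousLinearMap.smulRight_apply]
  ring

lemma norm_fderiv_sq_eq_sum (L : StrongDual ℝ E3) : ‖L‖ ^ 2 = ∑ j, L (.single j 1) ^ 2 := by
  simpa using (EuclideanSpace.basisFun (Fin 3) ℝ).norm_dual L

lemma re_sum_magD_mul_conj_smul_smul {x : E3} (hw : DifferentiableAt ℝ w x)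
    (hψ : DifferentiableAt ℝ ψ x) :
    (∑ j, magD A h ψ j x * conj (magD A h (fun y => w y • w y • ψ y) j x)).re =
      ∑ j, ‖magD A h (fun y => w y • ψ y) j x‖ ^ 2
        - h ^ 2 * (‖fderiv ℝ w x‖ ^ 2 * ‖ψ x‖ ^ 2) := by
  rw [Complex.re_sum, norm_fderiv_sq_eq_sum, Finset.sum_mul, Finset.mul_sum,
    ← Finset.sum_sub_distrib]
  refine Finset.sum_congr rfl fun j _ => ?_
  rw [magD_smul (ψ := fun y => w y • ψ y) hw (hw.smul hψ), magD_smul hw hψ]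
  simp only [← Complex.normSq_eq_norm_sq, Complex.normSq_apply, Complex.real_smul, map_sub, map_mul,
    Complex.conj_ofReal, Complex.conj_I, Complex.mul_re, Complex.ofReal_re, Complex.conj_re,
    Complex.ofReal_im, Complex.conj_im, Complex.I_re, Complex.I_im, Complex.mul_im, Complex.sub_re,
    Complex.sub_im, Complex.neg_re, Complex.neg_im]
  ring

lemma l2sq_smul : l2sq Ω (fun x => w x • ψ x) = ∫ x in Ω, w x ^ 2 * ‖ψ x‖ ^ 2 := by
  simp only [l2sq, norm_smul, mul_pow, Real.norm_eq_abs, sq_abs]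

lemma l2ipC_smul_smul : l2ipC Ω ψ (fun x => w x • w x • ψ x) = l2sq Ω (fun x => w x • ψ x) := by
  rw [l2ipC, l2sq_smul, ← integral_complex_ofReal]
  congr! 2 with x
  simp only [Complex.real_smul, map_mul, Complex.conj_ofReal, Complex.ofReal_mul,
    Complex.ofReal_pow, ← Complex.mul_conj']
  ring

theorem re_magFormC_smul_smul (hΩ : IsOpen Ω) (hA : Continuous A) (hw : ContDiff ℝ 1 w)
    (hc : HasCompactSupport w) (hs : tsupport w ⊆ Ω) (hψ : ContDiffOn ℝ 1 ψ Ω) :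
    (magFormC Ω A h ψ (fun x => w x • w x • ψ x)).re =
      magEnergy Ω A h (fun x => w x • ψ x)
        - h ^ 2 * ∫ x in Ω, ‖fderiv ℝ w x‖ ^ 2 * ‖ψ x‖ ^ 2 := by
  have hwψ : ContDiff ℝ 1 (fun x => w x • ψ x) := contDiff_smul_of_tsupport_subset hw hψ hΩ hs
  have hwwψ : ContDiff ℝ 1 (fun x => w x • w x • ψ x) := hw.smul hwψ
  have hform : IntegrableOn
      (fun x => ∑ j, magD A h ψ j x * conj (magD A h (fun y => w y • w y • ψ y) j x)) Ω := by
    refine integrableOn_of_continuousOn_of_eq_zero hΩ hc hs ?_ fun x _ hx => ?_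
    · exact continuousOn_finsetSum _ fun j _ => (continuousOn_magD hA hΩ hψ).mul
        (Complex.continuous_conj.comp_continuousOn (continuousOn_magD hA hΩ hwwψ.contDiffOn))
    · refine Finset.sum_eq_zero fun j _ => ?_
      rw [magD_eq_zero_of_notMem_tsupport fun hx' => hx (tsupport_smul_subset_left w _ hx'),
        map_zero, mul_zero]
  have henergy : IntegrableOn (fun x => ∑ j, ‖magD A h (fun y => w y • ψ y) j x‖ ^ 2) Ω :=
    (integrable_sum_norm_magD_sq hA hwψ hc.smul_right).integrableOn
  have hgrad : IntegrableOn (fun x => ‖fderiv ℝ w x‖ ^ 2 * ‖ψ x‖ ^ 2) Ω := by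
    refine integrableOn_of_continuousOn_of_eq_zero hΩ hc hs ?_ fun x _ hx => ?_
    · exact ((hw.continuous_fderiv one_ne_zero).norm.pow 2).continuousOn.mul
        (hψ.continuousOn.norm.pow 2)
    · simp [image_eq_zero_of_notMem_tsupport fun hx' => hx (tsupport_fderiv_subset ℝ hx')]
  rw [magEnergy, ← integral_const_mul, ← integral_sub henergy (hgrad.const_mul _)]
  refine (integral_re hform).symm.trans (setIntegral_congr_fun hΩ.measurableSet fun x hx => ?_)
  exact re_sum_magD_mul_conj_smul_smul (hw.differentiable one_ne_zero x)
    ((hψ.contDiffAt (hΩ.mem_nhds hx)).differentiableAt one_ne_zero)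

theorem IsMagEigenpair.magEnergy_smul (hψ : IsMagEigenpair Ω D A h lam ψ) (hΩ : IsOpen Ω)
    (hA : Continuous A) (hw : ContDiff ℝ (⊤ : ℕ∞) w) (hc : HasCompactSupport w)
    (hs : tsupport w ⊆ Ω) :
    magEnergy Ω A h (fun x => w x • ψ x) =
      lam * l2sq Ω (fun x => w x • ψ x) + h ^ 2 * ∫ x in Ω, ‖fderiv ℝ w x‖ ^ 2 * ‖ψ x‖ ^ 2 := by
  obtain ⟨-, hdom, hweak⟩ := hψ
  have hψ1 : ContDiffOn ℝ 1 ψ Ω := (hdom.1.mono subset_closure).of_le (by exact_mod_cast le_top)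
  have hims := re_magFormC_smul_smul (h := h) hΩ hA (hw.of_le (by exact_mod_cast le_top)) hc hs hψ1
  rw [hweak _ ((hdom.smul hw).smul hw), l2ipC_smul_smul, ← Complex.ofReal_mul,
    Complex.ofReal_re] at hims
  linarith

end Localization

section AgmonEstimate

variable {Ω D : Set E3} {A : E3 → E3} {α M K E r h lam : ℝ} {w : E3 → ℝ} {ψ : E3 → ℂ}

lemma l2sq_nonneg : 0 ≤ l2sq Ω ψ :=
  integral_nonneg fun _ => sq_nonneg _

lemma InFormDomain.integrableOn_mul_norm_sq (hψ : InFormDomain Ω D ψ) (hb : Bornology.IsBounded Ω)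
    {g : E3 → ℝ} (hg : Continuous g) : IntegrableOn (fun x => g x * ‖ψ x‖ ^ 2) Ω :=
  ((hg.continuousOn.mul (hψ.1.continuousOn.norm.pow 2)).integrableOn_compact
    hb.isCompact_closure).mono_set subset_closure

lemma InFormDomain.integrableOn_norm_sq (hψ : InFormDomain Ω D ψ) (hb : Bornology.IsBounded Ω) :
    IntegrableOn (fun x => ‖ψ x‖ ^ 2) Ω := by
  simpa only [one_mul] using hψ.integrableOn_mul_norm_sq hb (continuous_const (y := 1))

lemma IsAgmonWeight.hasCompactSupport (hw : IsAgmonWeight α M K r Ω w)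
    (hb : Bornology.IsBounded Ω) : HasCompactSupport w :=
  Metric.isCompact_of_isClosed_isBounded (isClosed_tsupport w) (hb.subset hw.tsupport_subset)

lemma IsAgmonWeight.sq_mul_integral_fderiv_sq_le (hw : IsAgmonWeight α M K r Ω w)
    (hψ : InFormDomain Ω D ψ) (hb : Bornology.IsBounded Ω) :
    r ^ 2 * ∫ x in Ω, ‖fderiv ℝ w x‖ ^ 2 * ‖ψ x‖ ^ 2 ≤
      α ^ 2 * l2sq Ω (fun x => w x • ψ x) + M * l2sq Ω ψ := by
  have hgrad : Continuous (fun x => ‖fderiv ℝ w x‖ ^ 2) :=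
    (hw.contDiff.continuous_fderiv (by simp)).norm.pow 2
  have hsq : IntegrableOn (fun x => w x ^ 2 * ‖ψ x‖ ^ 2) Ω :=
    hψ.integrableOn_mul_norm_sq hb (hw.contDiff.continuous.pow 2)
  rw [l2sq_smul, l2sq, ← integral_const_mul, ← integral_const_mul, ← integral_const_mul,
    ← integral_add (hsq.const_mul _) ((hψ.integrableOn_norm_sq hb).const_mul _)]
  refine integral_mono ((hψ.integrableOn_mul_norm_sq hb hgrad).const_mul _)
    ((hsq.const_mul _).add ((hψ.integrableOn_norm_sq hb).const_mul _)) fun x => ?_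
  calc r ^ 2 * (‖fderiv ℝ w x‖ ^ 2 * ‖ψ x‖ ^ 2)
      = r ^ 2 * ‖fderiv ℝ w x‖ ^ 2 * ‖ψ x‖ ^ 2 := (mul_assoc _ _ _).symm
    _ ≤ (α ^ 2 * w x ^ 2 + M) * ‖ψ x‖ ^ 2 := by
      gcongr
      exact hw.eikonal x
    _ = α ^ 2 * (w x ^ 2 * ‖ψ x‖ ^ 2) + M * ‖ψ x‖ ^ 2 := by ring

lemma IsAgmonWeight.integral_exp_mul_le (hw : IsAgmonWeight α M K r Ω w) (hΩ : IsOpen Ω)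
    (hψ : InFormDomain Ω D ψ) (hb : Bornology.IsBounded Ω) :
    ∫ x in Ω, Real.exp (2 * α * Metric.infDist x (frontier Ω) / r) * ‖ψ x‖ ^ 2 ≤
      K * (l2sq Ω (fun x => w x • ψ x) + l2sq Ω ψ) := by
  have hexp : Continuous (fun x => Real.exp (2 * α * Metric.infDist x (frontier Ω) / r)) := by
    have := Metric.continuous_infDist_pt (frontier Ω)
    fun_prop
  have hsq : IntegrableOn (fun x => w x ^ 2 * ‖ψ x‖ ^ 2) Ω :=
    hψ.integrableOn_mul_norm_sq hb (hw.contDiff.continuous.pow 2)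
  rw [l2sq_smul, l2sq, ← integral_add hsq (hψ.integrableOn_norm_sq hb), ← integral_const_mul]
  refine setIntegral_mono_on (hψ.integrableOn_mul_norm_sq hb hexp)
    ((hsq.add (hψ.integrableOn_norm_sq hb)).const_mul _) hΩ.measurableSet fun x hx => ?_
  calc Real.exp (2 * α * Metric.infDist x (frontier Ω) / r) * ‖ψ x‖ ^ 2
      ≤ K * (w x ^ 2 + 1) * ‖ψ x‖ ^ 2 := by
        gcongr
        exact hw.exp_le x hx
    _ = K * (w x ^ 2 * ‖ψ x‖ ^ 2 + ‖ψ x‖ ^ 2) := by ring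

lemma IsMagEigenpair.l2sq_smul_le (hψ : IsMagEigenpair Ω D A h lam ψ) (hΩ : IsOpen Ω)
    (hb : Bornology.IsBounded Ω) (hA : ContDiff ℝ 1 A) (hcurl : HasUnitCurl A) (hh : 0 < h)
    (hlam : lam ≤ E * h) (hw : IsAgmonWeight α M K √h Ω w) :
    (1 - E - α ^ 2) * l2sq Ω (fun x => w x • ψ x) ≤ M * l2sq Ω ψ := by
  have hc : HasCompactSupport w := hw.hasCompactSupport hb
  have hu : ContDiff ℝ 2 (fun x => w x • ψ x) := contDiff_infty.1
    (contDiff_smul_of_tsupport_subset hw.contDiff (hψ.2.1.1.mono subset_closure) hΩ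
      hw.tsupport_subset) 2
  have hlower := hcurl.mul_l2sq_le_magEnergy (h := h) hA hu hc.smul_right
    ((tsupport_smul_subset_left w ψ).trans hw.tsupport_subset)
  rw [hψ.magEnergy_smul hΩ hA.continuous hw.contDiff hc hw.tsupport_subset] at hlower
  have hgrad := hw.sq_mul_integral_fderiv_sq_le hψ.2.1 hb
  rw [Real.sq_sqrt hh.le] at hgrad
  refine le_of_mul_le_mul_left ?_ hh
  linarith [mul_le_mul_of_nonneg_left hgrad hh.le,
    mul_le_mul_of_nonneg_right hlam (l2sq_nonneg (Ω := Ω) (ψ := fun x => w x • ψ x))]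

theorem exists_integral_exp_infDist_frontier_le (hα : 0 ≤ α) (hE : α ^ 2 + E < 1) :
    ∃ C > 0, ∀ (Ω D : Set E3) (A : E3 → E3) (h lam : ℝ) (ψ : E3 → ℂ), IsOpen Ω →
      Bornology.IsBounded Ω → ContDiff ℝ 1 A → HasUnitCurl A → 0 < h →
      IsMagEigenpair Ω D A h lam ψ → lam ≤ E * h →
      ∫ x in Ω, Real.exp (2 * α * Metric.infDist x (frontier Ω) / √h) * ‖ψ x‖ ^ 2 ≤
        C * l2sq Ω ψ := by
  obtain ⟨M, K, hM, hK, hweight⟩ := exists_isAgmonWeight E3 hα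
  have hδ : 0 < 1 - E - α ^ 2 := by linarith
  refine ⟨K * (M / (1 - E - α ^ 2) + 1), by positivity, ?_⟩
  intro Ω D A h lam ψ hΩ hb hA hcurl hh hψ hlam
  obtain ⟨w, hw⟩ := hweight Ω (Real.sqrt_pos.2 hh)
  have hle : l2sq Ω (fun x => w x • ψ x) ≤ M / (1 - E - α ^ 2) * l2sq Ω ψ := by
    rw [div_mul_eq_mul_div, le_div_iff₀' hδ]
    exact hψ.l2sq_smul_le hΩ hb hA hcurl hh hlam hw
  calc ∫ x in Ω, Real.exp (2 * α * Metric.infDist x (frontier Ω) / √h) * ‖ψ x‖ ^ 2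
      ≤ K * (l2sq Ω (fun x => w x • ψ x) + l2sq Ω ψ) := hw.integral_exp_mul_le hΩ hψ.2.1 hb
    _ ≤ K * (M / (1 - E - α ^ 2) * l2sq Ω ψ + l2sq Ω ψ) := by gcongr
    _ = K * (M / (1 - E - α ^ 2) + 1) * l2sq Ω ψ := by ring

end AgmonEstimate

theorem statement4_general {α Θ : ℝ} (hα : α ∈ Set.Ioo 0 √(1 - Θ)) {err : ℝ → ℝ}
    (herr : err =o[𝓝[>] 0] fun h => h) :
    ∃ C > 0, ∃ h₀ > 0, ∀ h ∈ Set.Ioo 0 h₀, ∀ (Ω D : Set E3) (A : E3 → E3), IsOpen Ω →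
      Bornology.IsBounded Ω → ContDiff ℝ 1 A → HasUnitCurl A → ∀ (lam : ℝ) (ψ : E3 → ℂ),
      IsMagEigenpair Ω D A h lam ψ → lam ≤ Θ * h + err h →
      ∫ x in Ω, Real.exp (2 * α * Metric.infDist x (frontier Ω) / h ^ ((1 : ℝ) / 2)) * ‖ψ x‖ ^ 2 ≤
        C * l2sq Ω ψ := by
  have hgap : Θ < 1 - α ^ 2 := by linarith [(Real.lt_sqrt hα.1.le).1 hα.2]
  obtain ⟨E, hΘE, hE⟩ := exists_between hgap
  obtain ⟨C, hC, hagmon⟩ := exists_integral_exp_infDist_frontier_le (E := E) hα.1.le (by linarith)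
  obtain ⟨h₀, hh₀, hsmall⟩ := mem_nhdsGT_iff_exists_Ioo_subset.1 (herr.bound (sub_pos.2 hΘE))
  refine ⟨C, hC, h₀, hh₀, fun h hh Ω D A hΩ hb hA hcurl lam ψ hψ hlam => ?_⟩
  have herr_le : err h ≤ (E - Θ) * h := by
    have hnorm : ‖err h‖ ≤ (E - Θ) * ‖h‖ := hsmall hh
    rw [Real.norm_of_nonneg hh.1.le] at hnorm
    exact (le_abs_self _).trans hnorm
  rw [← Real.sqrt_eq_rpow]
  exact hagmon Ω D A h lam ψ hΩ hb hA hcurl hh.1 hψ (by linarith)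

/-- Agmon localization of low-lying eigenfunctions near the boundary
at the scale `h^{1/2}`: for `α ∈ (0, √(1-Θ₀))` and eigenvalues `λ ≤ Θ₀ h + o(h)`. -/
theorem statement4
    (Ω : Set E3) (hΩo : IsOpen Ω) (hΩb : Bornology.IsBounded Ω) (hΩc : IsConnected Ω)
    (hΩsm : HasSmoothBoundary Ω)
    (A : E3 → E3) (hA : ContDiff ℝ (⊤ : ℕ∞) A) (hcurl : HasUnitCurl A)
    (α : ℝ) (hα : α ∈ Set.Ioo 0 (Real.sqrt (1 - Theta0)))
    -- the `o(h)` in the eigenvalue bound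
    (err : ℝ → ℝ) (herr : err =o[𝓝[>] (0:ℝ)] fun h => h) :
    ∃ C > (0:ℝ), ∃ h₀ > (0:ℝ), ∀ h ∈ Set.Ioo (0:ℝ) h₀, ∀ lam : ℝ, ∀ ψ : E3 → ℂ,
      IsMagEigenpair Ω ∅ A h lam ψ →
      lam ≤ Theta0 * h + err h →
      (∫ x in Ω,
          Real.exp (2 * α * Metric.infDist x (frontier Ω) / h ^ ((1:ℝ)/2)) * ‖ψ x‖ ^ 2)
        ≤ C * l2sq Ω ψ := by
  obtain ⟨C, hC, h₀, hh₀, hbound⟩ := statement4_general hα herr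
  exact ⟨C, hC, h₀, hh₀, fun h hh =>
    hbound h hh Ω ∅ A hΩo hΩb (hA.of_le (by exact_mod_cast le_top)) hcurl⟩
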